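/- arXiv:quant-ph/0606225 — 2 statements merged into one kernel-verified Lean document; each statement's English description precedes it below -/
import Mathlib

section
/- Let ψ^{AR} be a density operator on A⊗R with A = A₁⊗A₂. Then ∫_{U(A)} ‖ σ^{A₂R}(U) − σ^{A₂}(U) ⊗ σ^R(U) ‖₁² dU ≤ (d_A d_R / d_{A₁}²) ( Tr[(ψ^{AR})²] + Tr[(ψ^A)²] Tr[(ψ^R)²] ). -/
open Matrix MeasureTheory
open scoped Kronecker ComplexOrder

/-- The positive semidefinite square root of a positive semidefinite matrix (Mathlib's former
`Matrix.PosSemidef.sqrt`). -/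
noncomputable def Matrix.PosSemidef.sqrt {n 𝕜 : Type*} [Fintype n] [RCLike 𝕜] [DecidableEq n]
    {A : Matrix n n 𝕜} (hA : A.PosSemidef) : Matrix n n 𝕜 :=
  hA.1.eigenvectorUnitary.1 * diagonal ((↑) ∘ Real.sqrt ∘ hA.1.eigenvalues) *
    (star hA.1.eigenvectorUnitary : Matrix n n 𝕜)

/-- Trace norm `‖M‖₁ = Tr √(Mᴴ M)` of a complex square matrix. -/
noncomputable def traceNorm {n : Type*} [Fintype n] [DecidableEq n] (M : Matrix n n ℂ) : ℝ :=
  ((Matrix.posSemidef_conjTranspose_mul_self M).sqrt.trace).re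

noncomputable instance matMeas {m n : Type*} : MeasurableSpace (Matrix m n ℂ) :=
  (inferInstance : MeasurableSpace (m → n → ℂ))

/-- `σ^{A₂R}(U) = Tr_{A₁}[(U ⊗ I_R) ψ (U ⊗ I_R)ᴴ]`. -/
noncomputable def sigmaA2R {ιA₁ ιA₂ ιR : Type} [Fintype ιA₁] [Fintype ιA₂] [Fintype ιR]
    [DecidableEq ιR]
    (ψ : Matrix ((ιA₁ × ιA₂) × ιR) ((ιA₁ × ιA₂) × ιR) ℂ)
    (U : Matrix (ιA₁ × ιA₂) (ιA₁ × ιA₂) ℂ) : Matrix (ιA₂ × ιR) (ιA₂ × ιR) ℂ :=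
  Matrix.of fun i j => ∑ a₁ : ιA₁,
    ((U ⊗ₖ (1 : Matrix ιR ιR ℂ)) * ψ * (U ⊗ₖ (1 : Matrix ιR ιR ℂ))ᴴ)
      ((a₁, i.1), i.2) ((a₁, j.1), j.2)

/-- Partial trace over the first tensor factor. -/
noncomputable def ptrFst {α β : Type*} [Fintype α] (M : Matrix (α × β) (α × β) ℂ) :
    Matrix β β ℂ :=
  Matrix.of fun i j => ∑ a : α, M (a, i) (a, j)

/-- Partial trace over the second tensor factor. -/
noncomputable def ptrSnd {α β : Type*} [Fintype β] (M : Matrix (α × β) (α × β) ℂ) :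
    Matrix α α ℂ :=
  Matrix.of fun i j => ∑ b : β, M (i, b) (j, b)

lemma meas_entry {n : Type} [Fintype n] [DecidableEq n] (a b : n) :
    Measurable (fun U : Matrix.unitaryGroup n ℂ => (U : Matrix n n ℂ) a b) :=
  (measurable_pi_apply b).comp ((measurable_pi_apply a).comp measurable_subtype_coe)

lemma meas_mul {n : Type} [Fintype n] [DecidableEq n] (V : Matrix.unitaryGroup n ℂ) :
    Measurable (fun U : Matrix.unitaryGroup n ℂ => V * U) := by
  apply Measurable.subtype_mk
  refine measurable_pi_lambda _ fun a => measurable_pi_lambda _ fun b => ?_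
  simp only [Matrix.mul_apply]
  exact Finset.measurable_sum _ fun i _ => (meas_entry i b).const_mul _

lemma integral_left_inv {n : Type} [Fintype n] [DecidableEq n]
    (μ : Measure (Matrix.unitaryGroup n ℂ)) 
    (hμ : ∀ V : Matrix.unitaryGroup n ℂ, μ.map (fun U => V * U) = μ)
    (V : Matrix.unitaryGroup n ℂ) (f : Matrix.unitaryGroup n ℂ → ℂ) (hf : Measurable f) :
    ∫ U, f (V * U) ∂μ = ∫ U, f U ∂μ := by
  conv_rhs => rw [← hμ V]
  rw [integral_map (meas_mul V).aemeasurable hf.aestronglyMeasurable]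

lemma traceNorm_sq_le {n : Type*} [Fintype n] [DecidableEq n] (M : Matrix n n ℂ) :
    traceNorm M ^ 2 ≤ Fintype.card n * ∑ i, ∑ j, ‖M i j‖ ^ 2 := by
  have h := Matrix.posSemidef_conjTranspose_mul_self M
  have h1 : traceNorm M = ∑ i, Real.sqrt (h.1.eigenvalues i) := by
    unfold traceNorm Matrix.PosSemidef.sqrt
    rw [Matrix.trace_mul_cycle]
    simp [Matrix.trace]
  have h2 : ∑ i, ∑ j, ‖M i j‖ ^ 2 = ∑ i, h.1.eigenvalues i := by
    have := h.1.trace_eq_sum_eigenvalues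
    have h3 : (Mᴴ * M).trace = ((∑ i, ∑ j, ‖M i j‖ ^ 2 : ℝ) : ℂ) := by
      rw [Finset.sum_comm]
      simp [Matrix.trace, Matrix.mul_apply, Complex.conj_mul']
    rw [h3] at this
    exact Complex.ofReal_injective (by simpa using this)
  rw [h1, h2]
  calc _ ≤ _ := sq_sum_le_card_mul_sum_sq
    _ = _ := by
      simp [Real.sq_sqrt (h.eigenvalues_nonneg _)]
lemma trace_conjTranspose_mul_self_eq {n : Type*} [Fintype n] (M : Matrix n n ℂ) :
    (Mᴴ * M).trace = ((∑ i, ∑ j, ‖M i j‖ ^ 2 : ℝ) : ℂ) := by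
  rw [Finset.sum_comm]
  simp [Matrix.trace, Matrix.mul_apply, Complex.conj_mul']

lemma frob_conj {n : Type} [Fintype n] [DecidableEq n] (X : Matrix n n ℂ)
    (U : Matrix.unitaryGroup n ℂ) :
    ∑ i, ∑ j, ‖((U : Matrix n n ℂ) * X * (U : Matrix n n ℂ)ᴴ) i j‖ ^ 2
      = ∑ i, ∑ j, ‖X i j‖ ^ 2 := by
  apply Complex.ofReal_injective
  rw [← trace_conjTranspose_mul_self_eq, ← trace_conjTranspose_mul_self_eq]
  have hU : (U : Matrix n n ℂ)ᴴ * (U : Matrix n n ℂ) = 1 := Matrix.mem_unitaryGroup_iff'.1 U.2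
  have : (((U : Matrix n n ℂ) * X * (U : Matrix n n ℂ)ᴴ)ᴴ
      * ((U : Matrix n n ℂ) * X * (U : Matrix n n ℂ)ᴴ))
      = (U : Matrix n n ℂ) * (Xᴴ * X) * (U : Matrix n n ℂ)ᴴ := by
    simp only [Matrix.conjTranspose_mul, Matrix.conjTranspose_conjTranspose]
    calc _ = (U : Matrix n n ℂ) * Xᴴ * ((U : Matrix n n ℂ)ᴴ * (U : Matrix n n ℂ)) * X
          * (U : Matrix n n ℂ)ᴴ := by simp only [Matrix.mul_assoc]
      _ = _ := by rw [hU]; simp only [Matrix.mul_assoc, Matrix.one_mul]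
  rw [this, Matrix.trace_mul_cycle, hU, Matrix.one_mul]

/-- conjugated matrix -/
noncomputable def cnj {n : Type} [Fintype n] [DecidableEq n] (X : Matrix n n ℂ)
    (U : Matrix.unitaryGroup n ℂ) : Matrix n n ℂ :=
  (U : Matrix n n ℂ) * X * (U : Matrix n n ℂ)ᴴ

lemma cnj_apply {n : Type} [Fintype n] [DecidableEq n] (X : Matrix n n ℂ)
    (U : Matrix.unitaryGroup n ℂ) (a b : n) :
    cnj X U a b = ∑ p, ∑ q, (U : Matrix n n ℂ) a p * X p q * star ((U : Matrix n n ℂ) b q) := by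
  simp only [cnj, Matrix.mul_apply, Matrix.conjTranspose_apply, Finset.sum_mul]
  rw [Finset.sum_comm]

lemma cnj_mul {n : Type} [Fintype n] [DecidableEq n] (X : Matrix n n ℂ)
    (V U : Matrix.unitaryGroup n ℂ) : cnj X (V * U) = cnj (cnj X U) V := by
  simp [cnj, Matrix.mul_assoc]

lemma cnj_meas {n : Type} [Fintype n] [DecidableEq n] (X : Matrix n n ℂ) (a b : n) :
    Measurable (fun U => cnj X U a b) := by
  simp only [cnj_apply]
  refine Finset.measurable_sum _ fun p _ => Finset.measurable_sum _ fun q _ => ?_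
  exact ((meas_entry a p).mul_const _).mul (Complex.continuous_conj.measurable.comp (meas_entry b q))

lemma cnj_bound {n : Type} [Fintype n] [DecidableEq n] (X : Matrix n n ℂ)
    (U : Matrix.unitaryGroup n ℂ) (a b : n) :
    ‖cnj X U a b‖ ≤ Real.sqrt (∑ i, ∑ j, ‖X i j‖ ^ 2) := by
  apply Real.le_sqrt_of_sq_le
  rw [← frob_conj X U]
  refine le_trans ?_ (Finset.single_le_sum (f := fun i => ∑ j, ‖cnj X U i j‖ ^ 2)
    (fun i _ => by positivity) (Finset.mem_univ a))
  exact (Finset.single_le_sum (f := fun j => ‖cnj X U a j‖ ^ 2)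
    (fun i _ => by positivity) (Finset.mem_univ b))

lemma gram_meas {n : Type} [Fintype n] [DecidableEq n] (X : Matrix n n ℂ) (a b c d : n) :
    Measurable (fun U => star (cnj X U a b) * cnj X U c d) :=
  (Complex.continuous_conj.measurable.comp (cnj_meas X a b)).mul (cnj_meas X c d)

lemma gram_int {n : Type} [Fintype n] [DecidableEq n] (X : Matrix n n ℂ)
    (μ : Measure (Matrix.unitaryGroup n ℂ)) [IsProbabilityMeasure μ] (a b c d : n) :
    Integrable (fun U => star (cnj X U a b) * cnj X U c d) μ := by
  refine Integrable.of_bound (gram_meas X a b c d).aestronglyMeasurable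
    (Real.sqrt (∑ i, ∑ j, ‖X i j‖ ^ 2) * Real.sqrt (∑ i, ∑ j, ‖X i j‖ ^ 2))
    (Filter.Eventually.of_forall fun U => ?_)
  rw [norm_mul, norm_star]
  exact mul_le_mul (cnj_bound X U a b) (cnj_bound X U c d) (norm_nonneg _) (Real.sqrt_nonneg _)

/-- second moments -/
noncomputable def gramM {n : Type} [Fintype n] [DecidableEq n] (X : Matrix n n ℂ)
    (μ : Measure (Matrix.unitaryGroup n ℂ)) (a b c d : n) : ℂ :=
  ∫ U, star (cnj X U a b) * cnj X U c d ∂μ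

lemma gram_cov {n : Type} [Fintype n] [DecidableEq n] (X : Matrix n n ℂ)
    (μ : Measure (Matrix.unitaryGroup n ℂ)) [IsProbabilityMeasure μ]
    (hμ : ∀ V : Matrix.unitaryGroup n ℂ, μ.map (fun U => V * U) = μ)
    (V : Matrix n n ℂ) (hV : V ∈ Matrix.unitaryGroup n ℂ) (a b c d : n) :
    gramM X μ a b c d = ∑ p, ∑ q, ∑ r, ∑ s,
      star (V a p) * V b q * (V c r * star (V d s)) * gramM X μ p q r s := by
  have h1 : gramM X μ a b c d
      = ∫ U, star (cnj X (⟨V, hV⟩ * U) a b) * cnj X (⟨V, hV⟩ * U) c d ∂μ :=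
    (integral_left_inv μ hμ ⟨V, hV⟩ _ (gram_meas X a b c d)).symm
  rw [h1]
  have h2 : ∀ U, star (cnj X (⟨V, hV⟩ * U) a b) * cnj X (⟨V, hV⟩ * U) c d
      = ∑ p, ∑ q, ∑ r, ∑ s, star (V a p) * V b q * (V c r * star (V d s))
        * (star (cnj X U p q) * cnj X U r s) := by
    intro U
    rw [cnj_mul, cnj_apply _ _ a b, cnj_apply _ _ c d]
    simp only [star_sum, Finset.sum_mul_sum]
    simp only [star_mul', star_star]
    refine Finset.sum_congr rfl fun p _ => ?_
    rw [Finset.sum_comm]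
    refine Finset.sum_congr rfl fun q _ => ?_
    refine Finset.sum_congr rfl fun r _ => ?_
    refine Finset.sum_congr rfl fun s _ => ?_
    ring
  simp only [h2]
  have hi := gram_int X μ
  rw [integral_finsetSum _ fun p _ => integrable_finsetSum _ fun q _ =>
    integrable_finsetSum _ fun r _ => integrable_finsetSum _ fun s _ => (hi p q r s).const_mul _]
  refine Finset.sum_congr rfl fun p _ => ?_
  rw [integral_finsetSum _ fun q _ =>
    integrable_finsetSum _ fun r _ => integrable_finsetSum _ fun s _ => (hi p q r s).const_mul _]
  refine Finset.sum_congr rfl fun q _ => ?_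
  rw [integral_finsetSum _ fun r _ => integrable_finsetSum _ fun s _ => (hi p q r s).const_mul _]
  refine Finset.sum_congr rfl fun r _ => ?_
  rw [integral_finsetSum _ fun s _ => (hi p q r s).const_mul _]
  refine Finset.sum_congr rfl fun s _ => ?_
  rw [integral_const_mul, gramM]

lemma gram_phase {n : Type} [Fintype n] [DecidableEq n] (X : Matrix n n ℂ)
    (μ : Measure (Matrix.unitaryGroup n ℂ)) [IsProbabilityMeasure μ]
    (hμ : ∀ V : Matrix.unitaryGroup n ℂ, μ.map (fun U => V * U) = μ)
    (i : n) (a b c d : n) (v : n → ℂ) (hv : v = fun j => if j = i then Complex.I else 1) :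
    gramM X μ a b c d = star (v a) * v b * (v c * star (v d)) * gramM X μ a b c d := by
  have hV : Matrix.diagonal v ∈ Matrix.unitaryGroup n ℂ := by
    rw [Matrix.mem_unitaryGroup_iff, Matrix.star_eq_conjTranspose, Matrix.diagonal_conjTranspose,
      Matrix.diagonal_mul_diagonal, ← Matrix.diagonal_one]
    congr 1
    funext j
    subst hv
    by_cases h : j = i <;> simp [h]
  conv_lhs => rw [gram_cov X μ hμ _ hV]
  simp [Matrix.diagonal_apply, Finset.sum_ite_eq, apply_ite, ite_mul]

lemma gram_zero {n : Type} [Fintype n] [DecidableEq n] (X : Matrix n n ℂ)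
    (μ : Measure (Matrix.unitaryGroup n ℂ)) [IsProbabilityMeasure μ]
    (hμ : ∀ V : Matrix.unitaryGroup n ℂ, μ.map (fun U => V * U) = μ)
    (a b c d : n) (h1 : ¬ (a = b ∧ c = d)) (h2 : ¬ (a = c ∧ b = d)) :
    gramM X μ a b c d = 0 := by
  have key : ∀ z g : ℂ, g = z * g → z ≠ 1 → g = 0 := by
    intro z g h hz
    have : (z - 1) * g = 0 := by linear_combination -h
    exact (mul_eq_zero.1 this).resolve_left (sub_ne_zero.2 hz)
  have hI : -Complex.I ≠ 1 := fun h => by simpa using congrArg Complex.im h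
  have hI' : Complex.I ≠ 1 := fun h => by simpa using congrArg Complex.im h
  have hI2 : (-1 : ℂ) ≠ 1 := by norm_num
  have hp := fun i => gram_phase X μ hμ i a b c d _ rfl
  by_cases hab : a = b
  · subst hab
    have hcd : c ≠ d := fun h => h1 ⟨rfl, h⟩
    refine key _ _ (hp c) ?_
    by_cases h : a = c <;> simp [h, hcd.symm, hI']
  · by_cases hac : a = c
    · subst hac
      have hbd : b ≠ d := fun h => h2 ⟨rfl, h⟩
      refine key _ _ (hp b) ?_
      simp [hab, hbd.symm, hI']
    · refine key _ _ (hp a) ?_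
      by_cases h : d = a
      · simp [h, Ne.symm hab, Ne.symm hac, hI2]
      · simp [h, Ne.symm hab, Ne.symm hac, hI]

lemma gram_perm {n : Type} [Fintype n] [DecidableEq n] (X : Matrix n n ℂ)
    (μ : Measure (Matrix.unitaryGroup n ℂ)) [IsProbabilityMeasure μ]
    (hμ : ∀ V : Matrix.unitaryGroup n ℂ, μ.map (fun U => V * U) = μ)
    (σ : Equiv.Perm n) (a b c d : n) :
    gramM X μ a b c d = gramM X μ (σ a) (σ b) (σ c) (σ d) := by
  have hV : (Matrix.of fun x y => if σ x = y then (1 : ℂ) else 0) ∈ Matrix.unitaryGroup n ℂ := by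
    rw [Matrix.mem_unitaryGroup_iff, Matrix.star_eq_conjTranspose]
    ext x y
    simp [Matrix.mul_apply, Matrix.one_apply, eq_comm]
  conv_lhs => rw [gram_cov X μ hμ _ hV]
  simp

lemma gram_had {n : Type} [Fintype n] [DecidableEq n] (X : Matrix n n ℂ)
    (μ : Measure (Matrix.unitaryGroup n ℂ)) [IsProbabilityMeasure μ]
    (hμ : ∀ V : Matrix.unitaryGroup n ℂ, μ.map (fun U => V * U) = μ)
    (a c : n) (hac : a ≠ c) :
    4 * gramM X μ a c a c = gramM X μ a a a a + gramM X μ c c c c + gramM X μ a c a c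
      + gramM X μ c a c a - gramM X μ a a c c - gramM X μ c c a a := by
  obtain ⟨s, hs1, hs⟩ : ∃ s : ℂ, star s = s ∧ 2 * (s * s) = 1 := by
    refine ⟨((Real.sqrt 2)⁻¹ : ℝ), Complex.conj_ofReal _, ?_⟩
    rw [← Complex.ofReal_mul, ← mul_inv, Real.mul_self_sqrt (by norm_num)]
    push_cast; norm_num
  have hs1' : (starRingEnd ℂ) s = s := hs1
  have hs2 : s * s + s * s = 1 := by linear_combination hs
  let V : Matrix n n ℂ := Matrix.of fun x y =>
    if x = a then s * ((if y = a then 1 else 0) + (if y = c then 1 else 0))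
    else if x = c then s * ((if y = a then 1 else 0) - (if y = c then 1 else 0))
    else if y = x then 1 else 0
  have hV : V ∈ Matrix.unitaryGroup n ℂ := by
    rw [Matrix.mem_unitaryGroup_iff, Matrix.star_eq_conjTranspose]
    ext x y
    rw [Matrix.mul_apply, Matrix.one_apply]
    have c1 : (a = x) ↔ (x = a) := eq_comm
    have c2 : (a = y) ↔ (y = a) := eq_comm
    have c3 : (c = x) ↔ (x = c) := eq_comm
    have c4 : (c = y) ↔ (y = c) := eq_comm
    have c5 : (y = x) ↔ (x = y) := eq_comm
    by_cases hxa : x = a <;> by_cases hya : y = a <;> by_cases hxc : x = c <;>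
      by_cases hyc : y = c <;>
      first
      | exact absurd (hxa.symm.trans hxc) hac
      | exact absurd (hya.symm.trans hyc) hac
      | (simp [V, hxa, hya, hxc, hyc, hac, hac.symm, hs1', mul_add, mul_sub, add_mul, sub_mul,
          Finset.sum_add_distrib, Finset.sum_sub_distrib, hs2, c1, c2, c3, c4, c5])
  have h := gram_cov X μ hμ _ hV a c a c
  have ha : ∀ y, V a y = s * ((if y = a then 1 else 0) + (if y = c then 1 else 0)) := by
    intro y; simp [V]
  have hc : ∀ y, V c y = s * ((if y = a then 1 else 0) - (if y = c then 1 else 0)) := by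
    intro y; simp [V, hac.symm]
  simp only [ha, hc] at h
  have z := gram_zero X μ hμ
  simp only [star_mul', star_add, star_sub, apply_ite star, star_one, star_zero, hs1] at h
  have h' : gramM X μ a c a c = (s * s) * (s * s) * ∑ p, ∑ q, ∑ r, ∑ t,
      ((if p = a then 1 else 0) + (if p = c then 1 else 0)) *
      ((if q = a then 1 else 0) - (if q = c then 1 else 0)) *
      (((if r = a then 1 else 0) + (if r = c then 1 else 0)) *
      ((if t = a then 1 else 0) - (if t = c then 1 else 0))) * gramM X μ p q r t := by
    rw [h]
    simp only [Finset.mul_sum]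
    refine Finset.sum_congr rfl fun p _ => Finset.sum_congr rfl fun q _ =>
      Finset.sum_congr rfl fun r _ => Finset.sum_congr rfl fun t _ => ?_
    ring
  have hs4 : s * s = 1 / 2 := by linear_combination hs / 2
  rw [hs4] at h'
  simp only [mul_assoc, ← Finset.mul_sum] at h'
  simp only [add_mul, sub_mul, ite_mul, one_mul, zero_mul, Finset.sum_add_distrib,
    Finset.sum_sub_distrib, Finset.sum_ite_eq', Finset.mem_univ, if_true] at h'
  rw [z a a a c (by simp [hac]) (by simp [hac]), z a a c a (by simp [hac.symm]) (by simp [hac]),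
    z a c a a (by simp [hac]) (by simp [hac.symm]), z a c c a (by simp [hac]) (by simp [hac]),
    z a c c c (by simp [hac]) (by simp [hac]), z c a a a (by simp [hac.symm]) (by simp [hac.symm]),
    z c a a c (by simp [hac.symm]) (by simp [hac.symm]),
    z c a c c (by simp [hac.symm]) (by simp [hac]),
    z c c a c (by simp [hac]) (by simp [hac.symm]),
    z c c c a (by simp [hac.symm]) (by simp [hac.symm])] at h'
  linear_combination 4 * h'

lemma gram_form {n : Type} [Fintype n] [DecidableEq n] (X : Matrix n n ℂ)
    (μ : Measure (Matrix.unitaryGroup n ℂ)) [IsProbabilityMeasure μ]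
    (hμ : ∀ V : Matrix.unitaryGroup n ℂ, μ.map (fun U => V * U) = μ) :
    ∃ (g1 : ℂ) (g2 : ℝ), 0 ≤ g2 ∧ ∀ a b c d, gramM X μ a b c d
      = g1 * ((if a = b then 1 else 0) * (if c = d then 1 else 0))
        + g2 * ((if a = c then 1 else 0) * (if b = d then 1 else 0)) := by
  by_cases hn : ∃ a c : n, a ≠ c
  swap
  · push Not at hn
    by_cases hne : Nonempty n
    · obtain ⟨a⟩ := hne
      refine ⟨gramM X μ a a a a, 0, le_rfl, fun a' b' c' d' => ?_⟩
      rw [hn a' a, hn b' a, hn c' a, hn d' a]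
      simp
    · exact ⟨0, 0, le_rfl, fun a => absurd ⟨a⟩ hne⟩
  obtain ⟨a, c, hac⟩ := hn
  have h2 : ∀ x y : n, x ≠ y → ∃ σ : Equiv.Perm n, σ x = a ∧ σ y = c := by
    intro x y hxy
    refine ⟨(Equiv.swap x a).trans (Equiv.swap (Equiv.swap x a y) c), ?_, ?_⟩
    · have : Equiv.swap x a y ≠ a := by
        intro h
        have h' : Equiv.swap x a y = Equiv.swap x a x := by rw [h, Equiv.swap_apply_left]
        exact hxy ((Equiv.swap x a).injective h').symm
      simp [Equiv.swap_apply_of_ne_of_ne this.symm hac]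
    · simp
  have hd : ∀ x, gramM X μ x x x x = gramM X μ a a a a := by
    intro x
    rw [gram_perm X μ hμ (Equiv.swap x a) x x x x, Equiv.swap_apply_left]
  have ho : ∀ x y, x ≠ y → gramM X μ x y x y = gramM X μ a c a c := by
    intro x y h
    obtain ⟨σ, h1, h3⟩ := h2 x y h
    rw [gram_perm X μ hμ σ x y x y, h1, h3]
  have hx : ∀ x y, x ≠ y → gramM X μ x x y y = gramM X μ a a c c := by
    intro x y h
    obtain ⟨σ, h1, h3⟩ := h2 x y h
    rw [gram_perm X μ hμ σ x x y y, h1, h3]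
  have hh := gram_had X μ hμ a c hac
  rw [hd c, ho c a hac.symm, hx c a hac.symm] at hh
  have hre : gramM X μ a c a c = ((∫ U, ‖cnj X U a c‖ ^ 2 ∂μ : ℝ) : ℂ) := by
    rw [gramM, ← integral_complex_ofReal]
    congr 1
    funext U
    simp [Complex.conj_mul']
  refine ⟨gramM X μ a a c c, ∫ U, ‖cnj X U a c‖ ^ 2 ∂μ, integral_nonneg fun U => by positivity,
    fun x y z w => ?_⟩
  rw [← hre]
  by_cases h1 : x = y ∧ z = w
  · obtain ⟨rfl, rfl⟩ := h1
    by_cases h3 : x = z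
    · subst h3
      simp only [if_true, hd]
      linear_combination - hh / 2
    · simp [h3, hx _ _ h3]
  · by_cases h3 : x = z ∧ y = w
    · obtain ⟨rfl, rfl⟩ := h3
      have : x ≠ y := fun h => h1 ⟨h, h⟩
      simp [this, ho _ _ this]
    · rw [gram_zero X μ hμ x y z w h1 h3]
      have e1 : ((if x = y then 1 else 0) * (if z = w then 1 else 0) : ℂ) = 0 := by
        rw [ite_zero_mul_ite_zero, if_neg h1]
      have e2 : ((if x = z then 1 else 0) * (if y = w then 1 else 0) : ℂ) = 0 := by
        rw [ite_zero_mul_ite_zero, if_neg h3]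
      rw [e1, e2]; simp
lemma twirl_bound {α β : Type} [Fintype α] [DecidableEq α] [Fintype β] [DecidableEq β]
    (X : Matrix (α × β) (α × β) ℂ) (hX : X.trace = 0)
    (μ : Measure (Matrix.unitaryGroup (α × β) ℂ)) [IsProbabilityMeasure μ]
    (hμ : ∀ V : Matrix.unitaryGroup (α × β) ℂ, μ.map (fun U => V * U) = μ) :
    Integrable (fun U => ∑ a₂ : β, ∑ b₂ : β, ‖∑ a₁ : α, cnj X U (a₁, a₂) (a₁, b₂)‖ ^ 2) μ ∧
    (Fintype.card α : ℝ) * ∫ U, ∑ a₂ : β, ∑ b₂ : β, ‖∑ a₁ : α, cnj X U (a₁, a₂) (a₁, b₂)‖ ^ 2 ∂μ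
      ≤ ∑ i, ∑ j, ‖X i j‖ ^ 2 := by
  obtain ⟨g1, g2, hg2, hg⟩ := gram_form X μ hμ
  have hi := gram_int X μ
  set N : ℝ := ∑ i, ∑ j, ‖X i j‖ ^ 2 with hN
  have hnorm : ∑ a, ∑ b, gramM X μ a b a b = (N : ℂ) := by
    have h1 : ∀ U, ∑ a, ∑ b, star (cnj X U a b) * cnj X U a b = (N : ℂ) := by
      intro U
      rw [hN, ← frob_conj X U]
      simp [cnj, Complex.conj_mul']
    have h2 : ∫ U, ∑ a, ∑ b, star (cnj X U a b) * cnj X U a b ∂μ = (N : ℂ) := by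
      simp only [h1]; simp
    rw [← h2, integral_finsetSum _ fun a _ => integrable_finsetSum _ fun b _ => hi a b a b]
    refine Finset.sum_congr rfl fun a _ => ?_
    rw [integral_finsetSum _ fun b _ => hi a b a b]
    rfl
  have htr : ∑ a, ∑ c, gramM X μ a a c c = 0 := by
    have h1 : ∀ U, ∑ a, ∑ c, star (cnj X U a a) * cnj X U c c = 0 := by
      intro U
      have hU : (U : Matrix (α × β) (α × β) ℂ)ᴴ * (U : Matrix (α × β) (α × β) ℂ) = 1 :=
        Matrix.mem_unitaryGroup_iff'.1 U.2
      have : ∑ c, cnj X U c c = 0 := by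
        change (cnj X U).trace = 0
        rw [cnj, Matrix.trace_mul_cycle, hU, Matrix.one_mul, hX]
      simp only [← Finset.mul_sum, this, mul_zero, Finset.sum_const_zero]
    have h2 : ∫ U, ∑ a, ∑ c, star (cnj X U a a) * cnj X U c c ∂μ = 0 := by
      simp only [h1]; simp
    rw [← h2, integral_finsetSum _ fun a _ => integrable_finsetSum _ fun b _ => hi a a b b]
    refine Finset.sum_congr rfl fun a _ => ?_
    rw [integral_finsetSum _ fun b _ => hi a a b b]
    rfl
  have hexp : ∀ U, (((∑ a₂ : β, ∑ b₂ : β, ‖∑ a₁ : α, cnj X U (a₁, a₂) (a₁, b₂)‖ ^ 2 : ℝ)) : ℂ)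
      = ∑ a₂ : β, ∑ b₂ : β, ∑ a₁ : α, ∑ c₁ : α,
        star (cnj X U (a₁, a₂) (a₁, b₂)) * cnj X U (c₁, a₂) (c₁, b₂) := by
    intro U
    push_cast
    refine Finset.sum_congr rfl fun a₂ _ => Finset.sum_congr rfl fun b₂ _ => ?_
    rw [← Complex.conj_mul', map_sum, Finset.sum_mul_sum]
    rfl
  have hint : Integrable (fun U => ∑ a₂ : β, ∑ b₂ : β, ∑ a₁ : α, ∑ c₁ : α,
        star (cnj X U (a₁, a₂) (a₁, b₂)) * cnj X U (c₁, a₂) (c₁, b₂)) μ :=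
    integrable_finsetSum _ fun a₂ _ => integrable_finsetSum _ fun b₂ _ =>
      integrable_finsetSum _ fun a₁ _ => integrable_finsetSum _ fun c₁ _ => hi _ _ _ _
  have hint' : Integrable
      (fun U => ∑ a₂ : β, ∑ b₂ : β, ‖∑ a₁ : α, cnj X U (a₁, a₂) (a₁, b₂)‖ ^ 2) μ := by
    have := hint.re
    refine this.congr (Filter.Eventually.of_forall fun U => ?_)
    change Complex.re _ = _
    rw [← hexp U, Complex.ofReal_re]
  refine ⟨hint', ?_⟩
  set T := ∫ U, ∑ a₂ : β, ∑ b₂ : β, ‖∑ a₁ : α, cnj X U (a₁, a₂) (a₁, b₂)‖ ^ 2 ∂μ with hT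
  have hT' : (T : ℂ) = ∑ a₂ : β, ∑ b₂ : β, ∑ a₁ : α, ∑ c₁ : α,
      gramM X μ (a₁, a₂) (a₁, b₂) (c₁, a₂) (c₁, b₂) := by
    rw [hT, ← integral_complex_ofReal]
    simp only [hexp]
    rw [integral_finsetSum _ fun a₂ _ => integrable_finsetSum _ fun b₂ _ =>
      integrable_finsetSum _ fun a₁ _ => integrable_finsetSum _ fun c₁ _ => hi _ _ _ _]
    refine Finset.sum_congr rfl fun a₂ _ => ?_
    rw [integral_finsetSum _ fun b₂ _ =>
      integrable_finsetSum _ fun a₁ _ => integrable_finsetSum _ fun c₁ _ => hi _ _ _ _]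
    refine Finset.sum_congr rfl fun b₂ _ => ?_
    rw [integral_finsetSum _ fun a₁ _ => integrable_finsetSum _ fun c₁ _ => hi _ _ _ _]
    refine Finset.sum_congr rfl fun a₁ _ => ?_
    rw [integral_finsetSum _ fun c₁ _ => hi _ _ _ _]
    rfl
  simp only [hg, Prod.mk.injEq, true_and, and_true] at hT' hnorm htr
  generalize hd1 : (Fintype.card α : ℝ) = d1
  generalize hd2 : (Fintype.card β : ℝ) = d2
  have hd1' : (Fintype.card α : ℂ) = (d1 : ℂ) := by rw [← hd1]; simp
  have hd2' : (Fintype.card β : ℂ) = (d2 : ℂ) := by rw [← hd2]; simp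
  have e1 : (T : ℂ) = g1 * (d2 * d1 ^ 2) + g2 * (d1 * d2 ^ 2) := by
    rw [hT', ← hd1', ← hd2']
    simp [Finset.sum_add_distrib]
    ring
  have e2 : (N : ℂ) = g1 * (d1 * d2) + g2 * (d1 * d2) ^ 2 := by
    rw [← hnorm, ← hd1', ← hd2']
    simp [Finset.sum_add_distrib]
    ring
  have e3 : 0 = g1 * (d1 * d2) ^ 2 + g2 * ((d1 * d2 : ℝ) : ℂ) := by
    rw [← htr]
    push_cast
    rw [← hd1', ← hd2']
    simp [Finset.sum_add_distrib]
    ring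
  have hd10 : 0 ≤ d1 := by rw [← hd1]; positivity
  by_cases hz : d1 * d2 = 0
  · have hN0 : 0 ≤ N := by positivity
    have : (T : ℂ) = 0 := by
      rcases mul_eq_zero.1 hz with h | h <;> rw [e1, h] <;> simp
    have : T = 0 := by exact_mod_cast this
    rw [this]; simpa using hN0
  · have hd1ne : d1 ≠ 0 := fun h => hz (by simp [h])
    have hd11 : 1 ≤ d1 := by
      rw [← hd1]
      have : Fintype.card α ≠ 0 := fun h => hd1ne (by rw [← hd1, h]; simp)
      exact_mod_cast Nat.one_le_iff_ne_zero.2 this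
    have hzc : ((d1 * d2 : ℝ) : ℂ) ≠ 0 := by exact_mod_cast hz
    have e4 : g1 * (d1 * d2) = - g2 := by
      apply mul_right_cancel₀ hzc
      push_cast at e3 ⊢
      linear_combination -e3
    have e5 : ((N - d1 * T : ℝ) : ℂ) = ((g2 * (d1 ^ 2 - 1) : ℝ) : ℂ) := by
      push_cast
      rw [e1, e2]
      linear_combination (1 - d1 ^ 2 : ℂ) * e4
    have e6 : N - d1 * T = g2 * (d1 ^ 2 - 1) := by exact_mod_cast e5
    have : 0 ≤ g2 * (d1 ^ 2 - 1) := mul_nonneg hg2 (by nlinarith)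
    linarith

/-- `R`-block of a matrix on `A ⊗ R` -/
def blk {α ρ : Type} (ψ : Matrix (α × ρ) (α × ρ) ℂ) (r s : ρ) : Matrix α α ℂ :=
  Matrix.of fun x y => ψ (x, r) (y, s)

lemma cnj_sub {n : Type} [Fintype n] [DecidableEq n] (X Y : Matrix n n ℂ)
    (U : Matrix.unitaryGroup n ℂ) : cnj (X - Y) U = cnj X U - cnj Y U := by
  simp [cnj, Matrix.mul_sub, Matrix.sub_mul]

lemma cnj_smul {n : Type} [Fintype n] [DecidableEq n] (z : ℂ) (X : Matrix n n ℂ)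
    (U : Matrix.unitaryGroup n ℂ) : cnj (z • X) U = z • cnj X U := by
  simp [cnj]

lemma cnj_sum {n ι : Type} [Fintype n] [DecidableEq n] [Fintype ι] (X : ι → Matrix n n ℂ)
    (U : Matrix.unitaryGroup n ℂ) : cnj (∑ t, X t) U = ∑ t, cnj (X t) U := by
  simp [cnj, Matrix.mul_sum, Matrix.sum_mul]

lemma cnj_trace {n : Type} [Fintype n] [DecidableEq n] (X : Matrix n n ℂ)
    (U : Matrix.unitaryGroup n ℂ) : (cnj X U).trace = X.trace := by
  have hU : (U : Matrix n n ℂ)ᴴ * (U : Matrix n n ℂ) = 1 := Matrix.mem_unitaryGroup_iff'.1 U.2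
  rw [cnj, Matrix.trace_mul_cycle, hU, Matrix.one_mul]

lemma sigma_apply {α β ρ : Type} [Fintype α] [DecidableEq α] [Fintype β] [DecidableEq β]
    [Fintype ρ] [DecidableEq ρ] (ψ : Matrix ((α × β) × ρ) ((α × β) × ρ) ℂ)
    (U : Matrix.unitaryGroup (α × β) ℂ) (a₂ b₂ : β) (r s : ρ) :
    sigmaA2R ψ U (a₂, r) (b₂, s) = ∑ a₁, cnj (blk ψ r s) U (a₁, a₂) (a₁, b₂) := by
  simp only [sigmaA2R, Matrix.of_apply]
  refine Finset.sum_congr rfl fun a₁ _ => ?_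
  rw [cnj_apply, Matrix.mul_apply, Fintype.sum_prod_type, Finset.sum_comm]
  simp only [Matrix.conjTranspose_apply, Matrix.kroneckerMap_apply, Matrix.mul_apply,
    Matrix.one_apply]
  rw [Finset.sum_comm]
  conv_rhs => rw [Finset.sum_comm]
  refine Finset.sum_congr rfl fun q _ => ?_
  rw [Finset.sum_eq_single s]
  · rw [Fintype.sum_prod_type]
    simp [blk, Finset.sum_mul]
  · intro t _ ht
    simp [ht.symm]
  · simp

lemma diff_apply {α β ρ : Type} [Fintype α] [DecidableEq α] [Fintype β] [DecidableEq β]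
    [Fintype ρ] [DecidableEq ρ] (ψ : Matrix ((α × β) × ρ) ((α × β) × ρ) ℂ)
    (U : Matrix.unitaryGroup (α × β) ℂ) (a₂ b₂ : β) (r s : ρ) :
    (sigmaA2R ψ (U : Matrix (α × β) (α × β) ℂ)
      - ptrSnd (sigmaA2R ψ U) ⊗ₖ ptrFst (sigmaA2R ψ U)) (a₂, r) (b₂, s)
      = ∑ a₁, cnj (blk (ψ - ptrSnd ψ ⊗ₖ ptrFst ψ) r s) U (a₁, a₂) (a₁, b₂) := by
  have hb : blk (ψ - ptrSnd ψ ⊗ₖ ptrFst ψ) r s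
      = blk ψ r s - (blk ψ r s).trace • ∑ t, blk ψ t t := by
    ext i j
    simp [blk, ptrSnd, ptrFst, Matrix.trace, Matrix.sum_apply, mul_comm]
  have h1 : ptrFst (sigmaA2R ψ U) r s = (blk ψ r s).trace := by
    rw [← cnj_trace _ U]
    simp only [ptrFst, Matrix.of_apply, sigma_apply]
    rw [Finset.sum_comm, Matrix.trace, Fintype.sum_prod_type]
    rfl
  have h2 : ptrSnd (sigmaA2R ψ U) a₂ b₂
      = ∑ a₁, (∑ t, cnj (blk ψ t t) U) (a₁, a₂) (a₁, b₂) := by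
    simp only [ptrSnd, Matrix.of_apply, sigma_apply, Matrix.sum_apply]
    rw [Finset.sum_comm]
  rw [Matrix.sub_apply, Matrix.kroneckerMap_apply, h1, h2, sigma_apply, hb, cnj_sub, cnj_smul,
    cnj_sum]
  simp only [Matrix.sub_apply, Matrix.smul_apply, Finset.sum_sub_distrib, smul_eq_mul,
    ← Finset.mul_sum]
  ring

lemma ptrSnd_psd {α β : Type} [Fintype α] [Fintype β] {M : Matrix (α × β) (α × β) ℂ}
    (h : M.PosSemidef) : (ptrSnd M).PosSemidef := by
  have : ptrSnd M = ∑ b, M.submatrix (fun i => (i, b)) (fun i => (i, b)) := by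
    ext i j; simp [ptrSnd, Matrix.sum_apply]
  rw [this]
  exact Matrix.posSemidef_sum _ fun b _ => h.submatrix _

lemma ptrFst_psd {α β : Type} [Fintype α] [Fintype β] {M : Matrix (α × β) (α × β) ℂ}
    (h : M.PosSemidef) : (ptrFst M).PosSemidef := by
  have : ptrFst M = ∑ a, M.submatrix (fun i => (a, i)) (fun i => (a, i)) := by
    ext i j; simp [ptrFst, Matrix.sum_apply]
  rw [this]
  exact Matrix.posSemidef_sum _ fun b _ => h.submatrix _

open scoped MatrixOrder Matrix.Norms.L2Operator in
lemma psd_factor {n : Type} [Fintype n] [DecidableEq n] {P : Matrix n n ℂ}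
    (hP : P.PosSemidef) : ∃ B : Matrix n n ℂ, P = Bᴴ * B :=
  CStarAlgebra.nonneg_iff_eq_star_mul_self.mp hP.nonneg

lemma psd_trace_mul {n : Type} [Fintype n] [DecidableEq n] {P Q : Matrix n n ℂ}
    (hP : P.PosSemidef) (hQ : Q.PosSemidef) : 0 ≤ (P * Q).trace.re := by
  obtain ⟨B, rfl⟩ := psd_factor hP
  have h : (Bᴴ * B * Q).trace = (B * Q * Bᴴ).trace := by
    rw [Matrix.mul_assoc, Matrix.trace_mul_comm]
  rw [h]
  exact (Complex.le_def.1 (hQ.mul_mul_conjTranspose_same B).trace_nonneg).1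

lemma purity_bound {α ρ : Type} [Fintype α] [DecidableEq α] [Fintype ρ] [DecidableEq ρ]
    (ψ : Matrix (α × ρ) (α × ρ) ℂ) (hψ : ψ.PosSemidef) :
    ∑ i, ∑ j, ‖(ψ - ptrSnd ψ ⊗ₖ ptrFst ψ) i j‖ ^ 2 ≤ (ψ * ψ).trace.re
            + ((ptrSnd ψ * ptrSnd ψ).trace.re) * ((ptrFst ψ * ptrFst ψ).trace.re) := by
  have hA := ptrSnd_psd hψ
  have hR := ptrFst_psd hψ
  have hK : (ptrSnd ψ ⊗ₖ ptrFst ψ).PosSemidef := hA.kronecker hR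
  have h0 := psd_trace_mul hψ hK
  have h1 := congrArg Complex.re (trace_conjTranspose_mul_self_eq (ψ - ptrSnd ψ ⊗ₖ ptrFst ψ))
  rw [Complex.ofReal_re] at h1
  rw [← h1, Matrix.conjTranspose_sub, hψ.1.eq, hK.1.eq]
  have h2 : ((ptrSnd ψ ⊗ₖ ptrFst ψ) * (ptrSnd ψ ⊗ₖ ptrFst ψ)).trace.re
      = ((ptrSnd ψ * ptrSnd ψ).trace.re) * ((ptrFst ψ * ptrFst ψ).trace.re) := by
    rw [← Matrix.mul_kronecker_mul, Matrix.trace_kronecker, Complex.mul_re]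
    have : (ptrSnd ψ * ptrSnd ψ).trace.im = 0 := by
      conv_lhs => enter [1, 1, 1]; rw [← hA.1.eq]
      rw [trace_conjTranspose_mul_self_eq, Complex.ofReal_im]
    rw [this]; ring
  rw [Matrix.sub_mul, Matrix.mul_sub, Matrix.mul_sub, Matrix.trace_sub, Matrix.trace_sub,
    Matrix.trace_sub, Matrix.trace_mul_comm (ptrSnd ψ ⊗ₖ ptrFst ψ) ψ]
  simp only [Complex.sub_re]
  rw [h2]
  linarith

/-- **Decoupling theorem (Theorem 2), one-shot FQSW.**  For a density operator `ψ^{AR}` on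
`A ⊗ R` with `A = A₁ ⊗ A₂`, the Haar average of the squared trace distance between
`σ^{A₂R}(U)` and `σ^{A₂}(U) ⊗ σ^{R}(U)` is at most
`(d_A d_R / d_{A₁}²)(Tr[(ψ^{AR})²] + Tr[(ψ^A)²]Tr[(ψ^R)²])`. -/
theorem decoupling
    {ιA₁ ιA₂ ιR : Type} [Fintype ιA₁] [DecidableEq ιA₁] [Fintype ιA₂] [DecidableEq ιA₂]
    [Fintype ιR] [DecidableEq ιR]
    (ψ : Matrix ((ιA₁ × ιA₂) × ιR) ((ιA₁ × ιA₂) × ιR) ℂ)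
    (hψ : ψ.PosSemidef) (hψtr : ψ.trace = 1)
    (μ : Measure (Matrix.unitaryGroup (ιA₁ × ιA₂) ℂ)) [IsProbabilityMeasure μ]
    (hμ : ∀ V : Matrix.unitaryGroup (ιA₁ × ιA₂) ℂ,
      μ.map (fun U : Matrix.unitaryGroup (ιA₁ × ιA₂) ℂ => V * U) = μ) :
    (∫ U : Matrix.unitaryGroup (ιA₁ × ιA₂) ℂ,
        (traceNorm (sigmaA2R ψ (U : Matrix (ιA₁ × ιA₂) (ιA₁ × ιA₂) ℂ)
            - ptrSnd (sigmaA2R ψ U) ⊗ₖ ptrFst (sigmaA2R ψ U))) ^ 2 ∂μ)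
      ≤ ((Fintype.card ιA₁ * Fintype.card ιA₂ * Fintype.card ιR : ℝ) / (Fintype.card ιA₁ : ℝ) ^ 2)
        * ((ψ * ψ).trace.re
            + ((ptrSnd ψ * ptrSnd ψ).trace.re) * ((ptrFst ψ * ptrFst ψ).trace.re)) := by
  classical
  set Z := ψ - ptrSnd ψ ⊗ₖ ptrFst ψ with hZ
  have htrA : (ptrSnd ψ).trace = 1 := by
    rw [← hψtr]
    simp only [Matrix.trace, ptrSnd, Matrix.diag_apply, Matrix.of_apply]
    rw [Fintype.sum_prod_type (f := fun x : (ιA₁ × ιA₂) × ιR => ψ x x)]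
  have hZtr : ∀ r s, (blk Z r s).trace = 0 := by
    intro r s
    have : (blk Z r s).trace = ptrFst ψ r s - (ptrSnd ψ).trace * ptrFst ψ r s := by
      simp [blk, hZ, Matrix.trace, ptrFst, Finset.sum_mul]
    rw [this, htrA, one_mul, sub_self]
  have htw := fun r s => twirl_bound (blk Z r s) (hZtr r s) μ hμ
  set F : ιR → ιR → Matrix.unitaryGroup (ιA₁ × ιA₂) ℂ → ℝ := fun r s U =>
    ∑ a₂ : ιA₂, ∑ b₂ : ιA₂, ‖∑ a₁ : ιA₁, cnj (blk Z r s) U (a₁, a₂) (a₁, b₂)‖ ^ 2 with hF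
  have hpt : ∀ U : Matrix.unitaryGroup (ιA₁ × ιA₂) ℂ,
      (traceNorm (sigmaA2R ψ (U : Matrix (ιA₁ × ιA₂) (ιA₁ × ιA₂) ℂ)
            - ptrSnd (sigmaA2R ψ U) ⊗ₖ ptrFst (sigmaA2R ψ U))) ^ 2
      ≤ (Fintype.card (ιA₂ × ιR) : ℝ) * ∑ r, ∑ s, F r s U := by
    intro U
    refine (traceNorm_sq_le _).trans (le_of_eq ?_)
    congr 1
    simp only [Fintype.sum_prod_type, diff_apply, hF, ← hZ]
    rw [Finset.sum_comm]
    refine Finset.sum_congr rfl fun r _ => ?_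
    conv_rhs => rw [Finset.sum_comm]
    refine Finset.sum_congr rfl fun a _ => ?_
    rw [Finset.sum_comm]
  have hint : Integrable (fun U => ∑ r, ∑ s, F r s U) μ :=
    integrable_finsetSum _ fun r _ => integrable_finsetSum _ fun s _ => (htw r s).1
  have h1 := integral_mono_of_nonneg (μ := μ)
    (Filter.Eventually.of_forall fun U => sq_nonneg _)
    (hint.const_mul (Fintype.card (ιA₂ × ιR) : ℝ)) (Filter.Eventually.of_forall hpt)
  refine h1.trans ?_
  have hsw : ∫ U, ∑ r, ∑ s, F r s U ∂μ = ∑ r, ∑ s, ∫ U, F r s U ∂μ := by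
    refine (integral_finsetSum _ fun r _ => integrable_finsetSum _ fun s _ => (htw r s).1).trans ?_
    exact Finset.sum_congr rfl fun r _ => integral_finsetSum _ fun s _ => (htw r s).1
  rw [integral_const_mul, hsw]
  have hN : ∑ r, ∑ s, ∑ i, ∑ j, ‖blk Z r s i j‖ ^ 2 = ∑ i, ∑ j, ‖Z i j‖ ^ 2 := by
    simp only [Fintype.sum_prod_type (f := fun x : (ιA₁ × ιA₂) × ιR => ∑ j, ‖Z x j‖ ^ 2)]
    rw [Finset.sum_comm]
    conv_rhs => rw [Finset.sum_comm]
    rw [Finset.sum_comm]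
    refine Finset.sum_congr rfl fun r _ => ?_
    rw [Finset.sum_comm]
    refine Finset.sum_congr rfl fun a _ => ?_
    rw [Fintype.sum_prod_type_right]
    rfl
  have hpur := purity_bound ψ hψ
  rw [← hZ, ← hN] at hpur
  set S := ∑ r, ∑ s, ∫ U, F r s U ∂μ with hS
  have hS1 : (Fintype.card ιA₁ : ℝ) * S ≤ ∑ r, ∑ s, ∑ i, ∑ j, ‖blk Z r s i j‖ ^ 2 := by
    rw [hS]
    simp only [Finset.mul_sum]
    exact Finset.sum_le_sum fun r _ => Finset.sum_le_sum fun s _ => (htw r s).2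
  have hcard : (Fintype.card ιA₁ : ℝ) ≠ 0 := by
    intro h
    have h' : Fintype.card ιA₁ = 0 := by exact_mod_cast h
    have : IsEmpty ιA₁ := Fintype.card_eq_zero_iff.1 h'
    simp [Matrix.trace] at hψtr
  have hpos : 0 < (Fintype.card ιA₁ : ℝ) := lt_of_le_of_ne (by positivity) hcard.symm
  have h2 := hS1.trans hpur
  rw [Fintype.card_prod]
  push_cast
  have e : (Fintype.card ιA₁ * Fintype.card ιA₂ * Fintype.card ιR : ℝ) / (Fintype.card ιA₁ : ℝ) ^ 2
      = (Fintype.card ιA₂ * Fintype.card ιR : ℝ) / (Fintype.card ιA₁ : ℝ) := by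
    field_simp
  rw [e, div_mul_eq_mul_div, le_div_iff₀ hpos, mul_assoc]
  refine mul_le_mul_of_nonneg_left ?_ (by positivity)
  rw [mul_comm]; exact h2
end

section
/- Let ξ be a pure state on C⊗D and let 0 ≤ ε ≤ 1. If the largest eigenvalue of the reduced density operator ξ^C satisfies λ_max(ξ^C) ≥ 1−ε, then Tr[ ξ ( ξ^C ⊗ ξ^D ) ] ≥ (1−ε)³ ≥ 1−3ε, and consequently ‖ ξ − ξ^C ⊗ ξ^D ‖₁ ≤ 2√(3ε). -/
open Matrix
open scoped Kronecker ComplexOrder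

/-- The pure state `|v⟩⟨v|` associated to a vector `v`. -/
noncomputable def pureState {ι : Type*} (v : ι → ℂ) : Matrix ι ι ℂ :=
  Matrix.vecMulVec v (star v)

/-- Reduced state `ξ^C` of a pure state on `C ⊗ D`. -/
noncomputable def redC {ιC ιD : Type} [Fintype ιD] (ξ : ιC × ιD → ℂ) : Matrix ιC ιC ℂ :=
  Matrix.of fun i j => ∑ d : ιD, ξ (i, d) * star (ξ (j, d))

/-- Reduced state `ξ^D` of a pure state on `C ⊗ D`. -/
noncomputable def redD {ιC ιD : Type} [Fintype ιC] (ξ : ιC × ιD → ℂ) : Matrix ιD ιD ℂ :=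
  Matrix.of fun i j => ∑ c : ιC, ξ (c, i) * star (ξ (c, j))

lemma trace_herm_cfc {n : Type*} [Fintype n] [DecidableEq n] {A : Matrix n n ℂ}
    (hA : A.IsHermitian) (f : ℝ → ℝ) :
    (cfc f A).trace = ((∑ i, f (hA.eigenvalues i) : ℝ) : ℂ) := by
  rw [hA.cfc_eq, Matrix.IsHermitian.cfc, Unitary.conjStarAlgAut_apply, Matrix.trace_mul_comm,
    ← mul_assoc]
  simp [Matrix.trace_diagonal]

lemma traceNorm_herm {n : Type*} [Fintype n] [DecidableEq n] {M : Matrix n n ℂ}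
    (hM : M.IsHermitian) : traceNorm M = ∑ i, |hM.eigenvalues i| := by
  have h1 : (Matrix.posSemidef_conjTranspose_mul_self M).sqrt = cfc Real.sqrt (Mᴴ * M) := by
    rw [(Matrix.posSemidef_conjTranspose_mul_self M).1.cfc_eq]
    rfl
  have hsa : IsSelfAdjoint M := hM
  have h2 : cfc Real.sqrt (Mᴴ * M) = cfc (fun x : ℝ => |x|) M := by
    rw [hM.eq, ← pow_two, ← cfc_comp_pow Real.sqrt 2 M]
    simp only [Real.sqrt_sq_eq_abs]
  rw [traceNorm, h1, h2, trace_herm_cfc hM]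
  simp

lemma classical_bound {n m : Type*} [Fintype n] [Fintype m] (c : n → ℂ) (G : Matrix m n ℂ)
    (hc : ∑ i, ‖c i‖ ^ 2 = 1) (hG : ∑ i, ∑ k, ‖G k i‖ ^ 2 = 1) :
    ∑ i, |‖c i‖ ^ 2 - ∑ k, ‖G k i‖ ^ 2| ≤ 2 * Real.sqrt (1 - ∑ k, ‖(G *ᵥ c) k‖ ^ 2) := by
  let g : n → EuclideanSpace ℂ m := fun i => WithLp.toLp 2 (fun k => G k i)
  have hg : ∀ i, ∑ k, ‖G k i‖ ^ 2 = ‖g i‖ ^ 2 := fun i => by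
    rw [EuclideanSpace.norm_sq_eq]
  have hF : ∑ k, ‖(G *ᵥ c) k‖ ^ 2 = ‖∑ i, c i • g i‖ ^ 2 := by
    rw [EuclideanSpace.norm_sq_eq]
    refine Finset.sum_congr rfl fun k _ => ?_
    congr 2
    simp [g, Matrix.mulVec, dotProduct, mul_comm]
  simp only [hg] at hG ⊢
  rw [hF]
  set b := ∑ i, ‖c i‖ * ‖g i‖ with hb
  have hle : ‖∑ i, c i • g i‖ ≤ b := by
    refine (norm_sum_le _ _).trans (le_of_eq ?_)
    simp [hb, norm_smul]
  have hle2 : ‖∑ i, c i • g i‖ ^ 2 ≤ b ^ 2 := by gcongr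
  have hm : ∑ i, (‖c i‖ - ‖g i‖) ^ 2 = 2 - 2 * b := by
    have : ∀ i, (‖c i‖ - ‖g i‖) ^ 2 = ‖c i‖ ^ 2 + ‖g i‖ ^ 2 - 2 * (‖c i‖ * ‖g i‖) :=
      fun i => by ring
    simp only [this, Finset.sum_sub_distrib, Finset.sum_add_distrib, ← Finset.mul_sum, hc, hG, ← hb]
    ring
  have hp : ∑ i, (‖c i‖ + ‖g i‖) ^ 2 = 2 + 2 * b := by
    have : ∀ i, (‖c i‖ + ‖g i‖) ^ 2 = ‖c i‖ ^ 2 + ‖g i‖ ^ 2 + 2 * (‖c i‖ * ‖g i‖) :=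
      fun i => by ring
    simp only [this, Finset.sum_add_distrib, ← Finset.mul_sum, hc, hG, ← hb]
    ring
  have hcs := Finset.sum_mul_sq_le_sq_mul_sq Finset.univ
    (fun i => |‖c i‖ - ‖g i‖|) (fun i => ‖c i‖ + ‖g i‖)
  simp only [sq_abs, hm, hp] at hcs
  have he : ∑ i, |‖c i‖ ^ 2 - ‖g i‖ ^ 2| = ∑ i, |‖c i‖ - ‖g i‖| * (‖c i‖ + ‖g i‖) := by
    refine Finset.sum_congr rfl fun i _ => ?_
    rw [← abs_of_nonneg (by positivity : 0 ≤ ‖c i‖ + ‖g i‖), ← abs_mul]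
    congr 1; ring
  rw [he]
  have h4 : (2 : ℝ) = Real.sqrt 4 := by
    rw [show (4 : ℝ) = 2 ^ 2 by norm_num]; simp
  rw [h4, ← Real.sqrt_mul (by norm_num)]
  apply Real.le_sqrt_of_sq_le
  nlinarith

lemma star_dot_self {n : Type*} [Fintype n] (v : n → ℂ) :
    star v ⬝ᵥ v = ((∑ i, ‖v i‖ ^ 2 : ℝ) : ℂ) := by
  simp [dotProduct, Complex.conj_mul']

lemma gram_diag {n m : Type*} [Fintype m] (G : Matrix m n ℂ) (i : n) :
    (Gᴴ * G) i i = ((∑ k, ‖G k i‖ ^ 2 : ℝ) : ℂ) := by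
  simp [Matrix.mul_apply, Complex.conj_mul']

lemma pure_bound {n m : Type*} [Fintype n] [DecidableEq n] [Fintype m] (ψ : n → ℂ)
    (B : Matrix m n ℂ) (hψ : star ψ ⬝ᵥ ψ = 1) (hB : (Bᴴ * B).trace = 1) :
    traceNorm (pureState ψ - Bᴴ * B) ≤
      2 * Real.sqrt (1 - (pureState ψ * (Bᴴ * B)).trace.re) := by
  have hM : (pureState ψ - Bᴴ * B).IsHermitian := by
    refine Matrix.IsHermitian.sub ?_ (Matrix.isHermitian_conjTranspose_mul_self B)
    ext i j
    simp [pureState, Matrix.vecMulVec_apply, mul_comm]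
  rw [traceNorm_herm hM]
  set U : Matrix n n ℂ := (hM.eigenvectorUnitary : Matrix n n ℂ) with hUdef
  have hU1 : Uᴴ * U = 1 := Unitary.coe_star_mul_self hM.eigenvectorUnitary
  have hU2 : U * Uᴴ = 1 := Unitary.coe_mul_star_self hM.eigenvectorUnitary
  have hdiag : Uᴴ * (pureState ψ - Bᴴ * B) * U
      = Matrix.diagonal (fun i => ((hM.eigenvalues i : ℝ) : ℂ)) := by
    conv_lhs => rw [hM.spectral_theorem, Unitary.conjStarAlgAut_apply]
    change Uᴴ * (U * _ * Uᴴ) * U = _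
    rw [mul_assoc U, ← mul_assoc Uᴴ U, hU1, one_mul, mul_assoc, hU1, mul_one]
    rfl
  have hps : Uᴴ * pureState ψ * U = pureState (Uᴴ *ᵥ ψ) := by
    rw [pureState, pureState, Matrix.mul_vecMulVec, Matrix.vecMulVec_mul, Matrix.star_mulVec,
      Matrix.conjTranspose_conjTranspose]
  have hgr : Uᴴ * (Bᴴ * B) * U = (B * U)ᴴ * (B * U) := by
    rw [Matrix.conjTranspose_mul]; simp only [mul_assoc, Matrix.mul_assoc]
  rw [mul_sub, sub_mul, hps, hgr] at hdiag
  have hev : ∀ i, hM.eigenvalues i = ‖(Uᴴ *ᵥ ψ) i‖ ^ 2 - ∑ k, ‖(B * U) k i‖ ^ 2 := by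
    intro i
    have h := congrFun (congrFun hdiag i) i
    rw [Matrix.sub_apply, gram_diag, Matrix.diagonal_apply_eq, pureState, Matrix.vecMulVec_apply,
      Pi.star_apply, RCLike.star_def, Complex.mul_conj'] at h
    exact_mod_cast h.symm
  simp only [hev]
  have h1 : ∑ i, ‖(Uᴴ *ᵥ ψ) i‖ ^ 2 = 1 := by
    have h := star_dot_self (Uᴴ *ᵥ ψ)
    rw [Matrix.star_mulVec, Matrix.conjTranspose_conjTranspose, Matrix.dotProduct_mulVec,
      Matrix.vecMul_vecMul, hU2, Matrix.vecMul_one, hψ] at h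
    exact_mod_cast h.symm
  have h2 : ∑ i, ∑ k, ‖(B * U) k i‖ ^ 2 = 1 := by
    have h : ((B * U)ᴴ * (B * U)).trace = 1 := by
      rw [← hgr, Matrix.trace_mul_comm, ← mul_assoc, hU2, one_mul, hB]
    simp only [Matrix.trace, Matrix.diag, gram_diag] at h
    exact_mod_cast h
  have h3 : (pureState ψ * (Bᴴ * B)).trace.re = ∑ k, ‖((B * U) *ᵥ (Uᴴ *ᵥ ψ)) k‖ ^ 2 := by
    rw [Matrix.mulVec_mulVec, Matrix.mul_assoc, hU2, Matrix.mul_one, pureState,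
      Matrix.vecMulVec_mul, Matrix.trace_vecMulVec, dotProduct_comm, ← Matrix.vecMul_vecMul,
      ← Matrix.dotProduct_mulVec, ← Matrix.star_mulVec, star_dot_self, Complex.ofReal_re]
  rw [h3]
  exact classical_bound _ _ h1 h2

/-- **Near-product pure states.**  If `ξ` is a pure state on `C ⊗ D` whose reduced state
`ξ^C` has largest eigenvalue at least `1 − ε`, then `Tr[ξ(ξ^C ⊗ ξ^D)] ≥ (1−ε)³ ≥ 1−3ε`
and `‖ξ − ξ^C ⊗ ξ^D‖₁ ≤ 2√(3ε)`. -/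
theorem near_product_pure_state
    {ιC ιD : Type} [Fintype ιC] [DecidableEq ιC] [Nonempty ιC]
    [Fintype ιD] [DecidableEq ιD]
    (ξ : ιC × ιD → ℂ) (hξ : star ξ ⬝ᵥ ξ = 1)
    (ε : ℝ) (hε0 : 0 ≤ ε) (hε1 : ε ≤ 1)
    (hherm : (redC ξ).IsHermitian)
    (hmax : 1 - ε ≤ Finset.univ.sup' Finset.univ_nonempty hherm.eigenvalues) :
    (pureState ξ * (redC ξ ⊗ₖ redD ξ)).trace.re ≥ (1 - ε) ^ 3
    ∧ (1 - ε) ^ 3 ≥ 1 - 3 * ε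
    ∧ traceNorm (pureState ξ - redC ξ ⊗ₖ redD ξ) ≤ 2 * Real.sqrt (3 * ε) := by
  set A : Matrix ιC ιD ℂ := Matrix.of fun c d => ξ (c, d) with hAdef
  have hC : redC ξ = A * Aᴴ := by
    ext i j; simp [redC, A, Matrix.mul_apply]
  have hD : redD ξ = Aᵀ * Aᵀᴴ := by
    ext i j; simp [redD, A, Matrix.mul_apply]
  have hσ : redC ξ ⊗ₖ redD ξ = ((A ⊗ₖ Aᵀ)ᴴ)ᴴ * (A ⊗ₖ Aᵀ)ᴴ := by
    rw [hC, hD, Matrix.mul_kronecker_mul, Matrix.conjTranspose_conjTranspose,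
      Matrix.conjTranspose_kronecker]
  have htC : (redC ξ).trace = 1 := by
    rw [← hξ]
    simp [Matrix.trace, redC, dotProduct, Fintype.sum_prod_type, mul_comm]
  have htD : (redD ξ).trace = 1 := by
    rw [← hξ]
    simp only [Matrix.trace, redD, dotProduct, Fintype.sum_prod_type, Matrix.diag, Matrix.of_apply]
    rw [Finset.sum_comm]
    simp [mul_comm]
  have hF : (pureState ξ * (redC ξ ⊗ₖ redD ξ)).trace = (redC ξ ^ 3).trace := by
    have e : (redC ξ ^ 3).trace = (A * (Aᴴ * A) * Aᴴ * A * Aᴴ).trace := by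
      rw [hC, pow_succ, pow_two]; simp only [Matrix.mul_assoc]
    have hv : (redC ξ ⊗ₖ redD ξ) *ᵥ ξ = fun p => (redC ξ * A * (redD ξ)ᵀ) p.1 p.2 := by
      ext ⟨c, d⟩
      simp only [Matrix.mulVec, dotProduct, Fintype.sum_prod_type, Matrix.kroneckerMap_apply,
        Matrix.mul_apply, Matrix.transpose_apply, A, Matrix.of_apply, Finset.sum_mul]
      rw [Finset.sum_comm]
      refine Finset.sum_congr rfl fun _ _ => Finset.sum_congr rfl fun _ _ => by ring
    rw [pureState, Matrix.trace_mul_comm, Matrix.mul_vecMulVec, Matrix.trace_vecMulVec, hv]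
    have e2 : (fun p : ιC × ιD => (redC ξ * A * (redD ξ)ᵀ) p.1 p.2) ⬝ᵥ star ξ
        = (redC ξ * A * (redD ξ)ᵀ * Aᴴ).trace := by
      simp [dotProduct, Fintype.sum_prod_type, Matrix.trace, Matrix.mul_apply (N := Aᴴ), A]
    have hDT : (redD ξ)ᵀ = Aᴴ * A := by
      rw [hD, Matrix.transpose_mul]; rfl
    rw [e2, e, hDT, hC]
    simp only [Matrix.mul_assoc]
  have hF2 : (pureState ξ * (redC ξ ⊗ₖ redD ξ)).trace.re = ∑ i, hherm.eigenvalues i ^ 3 := by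
    have hsa : IsSelfAdjoint (redC ξ) := hherm
    rw [hF, ← cfc_pow_id (R := ℝ) (redC ξ) 3, trace_herm_cfc hherm, Complex.ofReal_re]
  have hpsd : (redC ξ).PosSemidef := by
    rw [hC]; exact Matrix.posSemidef_self_mul_conjTranspose A
  have hnn : ∀ i, 0 ≤ hherm.eigenvalues i := hpsd.eigenvalues_nonneg
  have part1 : (pureState ξ * (redC ξ ⊗ₖ redD ξ)).trace.re ≥ (1 - ε) ^ 3 := by
    obtain ⟨i, -, hi⟩ := Finset.exists_mem_eq_sup' Finset.univ_nonempty hherm.eigenvalues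
    rw [hi] at hmax
    rw [hF2]
    calc (1 - ε) ^ 3 ≤ hherm.eigenvalues i ^ 3 := pow_le_pow_left₀ (by linarith) hmax 3
      _ ≤ _ := Finset.single_le_sum (f := fun i => hherm.eigenvalues i ^ 3)
        (fun j _ => pow_nonneg (hnn j) 3) (Finset.mem_univ i)
  have part2 : (1 - ε) ^ 3 ≥ 1 - 3 * ε := by
    nlinarith [sq_nonneg ε, mul_nonneg (sq_nonneg ε) (by linarith : (0 : ℝ) ≤ 1 - ε)]
  refine ⟨part1, part2, ?_⟩
  have htr : (((A ⊗ₖ Aᵀ)ᴴ)ᴴ * (A ⊗ₖ Aᵀ)ᴴ).trace = 1 := by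
    rw [← hσ, Matrix.trace_kronecker, htC, htD, one_mul]
  have hb := pure_bound ξ ((A ⊗ₖ Aᵀ)ᴴ) hξ htr
  rw [← hσ] at hb
  refine hb.trans ?_
  gcongr
  linarith
end
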